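/- arXiv:2301.13200 — 6 statements merged into one kernel-verified Lean document; each statement's English description precedes it below -/
import Mathlib

section
/- Let θ ∈ (0, π), s ≥ 0 and x ∈ ℂ. Set μ_L := cos(x)/√(sin θ), μ_R := cos(x+θ)/√(sin θ) and a := √(2/sin θ), where cos is the complex cosine and the square roots are the positive real square roots (note sin θ > 0). Let P := (gaussianReal 0 1).prod (gaussianReal 0 1) be the law of a pair (z₁, z₂) of independent standard real Gaussians. Then the complex-valued integral ∫ exp(−s − μ_L·(a·√s·z₁) − μ_R·(a·√s·(−cos(θ)·z₁ + sin(θ)·z₂))) dP(z₁,z₂) equals 1. -/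
/-!
The exponent is linear in two independent standard Gaussians, so its expectation is explicit: up to
the factor `exp (-s)` it is `exp (a² s Q / 2)`, with `Q = μ_L² - 2 μ_L μ_R cos θ + μ_R²` the
covariance form of the pair with correlation `-cos θ`. The cosines parametrise a level set of this
form: `cos² x - 2 cos x cos (x + θ) cos θ + cos² (x + θ) = sin² θ` for every `x`. Hence
`Q = sin θ`, and `a² = 2 / sin θ` makes the two exponents cancel.
-/

open MeasureTheory ProbabilityTheory

lemma cos_sq_sub_two_mul_cos_mul_cos_add_cos_add_sq (x θ : ℂ) :
    Complex.cos x ^ 2 - 2 * Complex.cos x * Complex.cos (x + θ) * Complex.cos θ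
      + Complex.cos (x + θ) ^ 2 = Complex.sin θ ^ 2 := by
  rw [Complex.cos_add]
  linear_combination Complex.sin θ ^ 2 * Complex.sin_sq_add_cos_sq x
    - Complex.cos x ^ 2 * Complex.sin_sq_add_cos_sq θ

lemma cos_div_sqrt_sin_quadratic_form {θ : ℝ} (hθ : 0 ≤ Real.sin θ) (x : ℂ) :
    (Complex.cos x / √(Real.sin θ)) ^ 2
      - 2 * (Complex.cos x / √(Real.sin θ)) * (Complex.cos (x + θ) / √(Real.sin θ)) * Real.cos θ
      + (Complex.cos (x + θ) / √(Real.sin θ)) ^ 2 = Real.sin θ := by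
  have sq_sqrt_sin : (√(Real.sin θ) : ℂ) ^ 2 = Real.sin θ := by
    exact_mod_cast Real.sq_sqrt hθ
  calc
    _ = (Complex.cos x ^ 2 - 2 * Complex.cos x * Complex.cos (x + θ) * Complex.cos θ
          + Complex.cos (x + θ) ^ 2) / (√(Real.sin θ) : ℂ) ^ 2 := by
      rw [Complex.ofReal_cos]; ring
    _ = Complex.sin θ ^ 2 / Complex.sin θ := by
      rw [cos_sq_sub_two_mul_cos_mul_cos_add_cos_add_sq, sq_sqrt_sin, Complex.ofReal_sin]
    _ = Real.sin θ := by
      rw [pow_two, mul_self_div_self, Complex.ofReal_sin]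

lemma integral_cexp_mul_gaussianReal (m : ℝ) (v : NNReal) (z : ℂ) :
    ∫ y : ℝ, Complex.exp (z * y) ∂(gaussianReal m v) = Complex.exp (z * m + v * z ^ 2 / 2) :=
  complexMGF_id_gaussianReal z

lemma integral_cexp_add_gaussianReal_prod (m₁ m₂ : ℝ) (v₁ v₂ : NNReal) (z w : ℂ) :
    ∫ p : ℝ × ℝ, Complex.exp (z * p.1 + w * p.2) ∂((gaussianReal m₁ v₁).prod (gaussianReal m₂ v₂))
      = Complex.exp (z * m₁ + v₁ * z ^ 2 / 2 + (w * m₂ + v₂ * w ^ 2 / 2)) := by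
  simp_rw [Complex.exp_add (z * _) (w * _)]
  rw [integral_prod_mul (fun y : ℝ ↦ Complex.exp (z * y)) (fun y : ℝ ↦ Complex.exp (w * y)),
    integral_cexp_mul_gaussianReal, integral_cexp_mul_gaussianReal, ← Complex.exp_add]

lemma integral_cexp_correlated_gaussianReal (σ τ θ : ℝ) (u w : ℂ) :
    ∫ p : ℝ × ℝ,
        Complex.exp (u * ((σ * p.1 : ℝ) : ℂ)
          + w * ((τ * (-(Real.cos θ) * p.1 + Real.sin θ * p.2) : ℝ) : ℂ))
        ∂((gaussianReal 0 1).prod (gaussianReal 0 1))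
      = Complex.exp (((σ * u) ^ 2 - 2 * (σ * u) * (τ * w) * Real.cos θ + (τ * w) ^ 2) / 2) := by
  have regroup (p : ℝ × ℝ) :
      u * ((σ * p.1 : ℝ) : ℂ) + w * ((τ * (-(Real.cos θ) * p.1 + Real.sin θ * p.2) : ℝ) : ℂ)
        = (σ * u - τ * w * Real.cos θ) * p.1 + τ * w * Real.sin θ * p.2 := by
    simp only [Complex.ofReal_mul, Complex.ofReal_add, Complex.ofReal_neg]
    ring
  have sin_sq_add_cos_sq : (Real.sin θ : ℂ) ^ 2 + (Real.cos θ : ℂ) ^ 2 = 1 := by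
    exact_mod_cast Real.sin_sq_add_cos_sq θ
  simp_rw [regroup]
  rw [integral_cexp_add_gaussianReal_prod]
  congr 1
  simp only [Complex.ofReal_zero, NNReal.coe_one, Complex.ofReal_one]
  linear_combination (τ * w) ^ 2 / 2 * sin_sq_add_cos_sq

/-- Fixed-time content of the martingale Lemma 7.1: with `θ ∈ (0,π)`, `s ≥ 0`,
`μ_L = cos x / √(sin θ)`, `μ_R = cos (x+θ) / √(sin θ)`, `a = √(2 / sin θ)`, and
`(z₁, z₂)` a pair of independent standard Gaussians,
`E[exp(−s − μ_L·(a√s z₁) − μ_R·(a√s(−cos θ · z₁ + sin θ · z₂)))] = 1`. -/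
theorem exp_martingale_fixed_time (θ s : ℝ) (hθ0 : 0 < θ) (hθπ : θ < Real.pi)
    (hs : 0 ≤ s) (x : ℂ) (μL μR : ℂ) (a : ℝ)
    (hμL : μL = Complex.cos x / (Real.sqrt (Real.sin θ) : ℂ))
    (hμR : μR = Complex.cos (x + (θ : ℂ)) / (Real.sqrt (Real.sin θ) : ℂ))
    (ha : a = Real.sqrt (2 / Real.sin θ)) :
    ∫ p : ℝ × ℝ,
        Complex.exp (-(s : ℂ) - μL * ((a * Real.sqrt s * p.1 : ℝ) : ℂ)
          - μR * ((a * Real.sqrt s * (-(Real.cos θ) * p.1 + Real.sin θ * p.2) : ℝ) : ℂ))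
        ∂((gaussianReal 0 1).prod (gaussianReal 0 1)) = 1 := by
  have hsin : 0 < Real.sin θ := Real.sin_pos_of_pos_of_lt_pi hθ0 hθπ
  have quadratic_form : μL ^ 2 - 2 * μL * μR * Real.cos θ + μR ^ 2 = Real.sin θ := by
    rw [hμL, hμR]
    exact cos_div_sqrt_sin_quadratic_form hsin.le x
  have variance_mul_sin : ((a * √s : ℝ) : ℂ) ^ 2 * Real.sin θ = 2 * s := by
    have : (a * √s) ^ 2 * Real.sin θ = 2 * s := by
      rw [ha, mul_pow, Real.sq_sqrt (by positivity), Real.sq_sqrt hs]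
      field_simp
    exact_mod_cast this
  have factor_integrand (X Y : ℂ) : Complex.exp (-(s : ℂ) - μL * X - μR * Y)
      = Complex.exp (-(s : ℂ)) * Complex.exp (-μL * X + -μR * Y) := by
    rw [← Complex.exp_add]
    ring_nf
  simp_rw [factor_integrand]
  rw [integral_const_mul, integral_cexp_correlated_gaussianReal, ← Complex.exp_add,
    ← Complex.exp_zero]
  congr 1
  linear_combination
    ((a * √s : ℝ) : ℂ) ^ 2 / 2 * quadratic_form + variance_mul_sin / 2
end

section
/- Let r > 0 and let g : ℂ → ℂ be holomorphic on {z ∈ ℂ : |z| > r}, satisfy g(conj z) = conj(g z) for all |z| > r, and satisfy g(z) − z → 0 as |z| → ∞ (along the cobounded filter on ℂ). Let R > r and let u ∈ ℂ with u ∉ g({z : |z| ≥ R}). Then (1/π) ∫_{θ=0}^{π} G(u, g(R·exp(iθ))) dθ = −2·log R. -/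
/-- The free-boundary Green function of the upper half-plane (without
normalization at infinity): `G(z,w) = −log|z−w| − log|z − conj w|`. -/
noncomputable def greenG (z w : ℂ) : ℝ :=
  -Real.log ‖z - w‖ - Real.log ‖z - (starRingEnd ℂ) w‖

/-!
By the symmetry of `g`, integrating `G(u, g(·))` over the upper semicircle amounts to integrating
`-log ‖u - g(·)‖` over the whole circle `|z| = R`. If `g(z) / z → c ≠ 0` at infinity, then
`z ↦ R (u - g(z)) / z` is holomorphic and zero-free outside this circle with value `-R c` at
infinity, and on the circle it has the same modulus as `u - g(z)`. By the mean value property for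
the logarithm of its modulus, transported from the disc by `z ↦ z⁻¹`, the average of
`log ‖u - g(·)‖` is `log (R ‖c‖)`.
-/

open Bornology Filter Function MeasureTheory Metric Real Set Topology

section CircleAverage

variable {E : Type*} [NormedAddCommGroup E] [NormedSpace ℝ E]

theorem circleAverage_comp_inv (f : ℂ → E) (R : ℝ) :
    circleAverage (fun z ↦ f z⁻¹) 0 R⁻¹ = circleAverage f 0 R := by
  rw [circleAverage_eq_circleAverage_zero_one, circleAverage_eq_circleAverage_zero_one (R := R),
    ← circleAverage_zero_one_congr_inv (f := fun z ↦ f (R * z + 0))]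
  simp [mul_comm]

theorem circleAverage_eq_integral_zero_pi {f : ℂ → E} {c : ℂ} {R : ℝ}
    (hf : CircleIntegrable f c R) :
    circleAverage f c R =
      (2 * π)⁻¹ • ∫ θ in 0..π, (f (circleMap c R θ) + f (circleMap c R (-θ))) := by
  set φ : ℝ → E := fun θ ↦ f (circleMap c R θ)
  have φ_periodic : Periodic φ (2 * π) := (periodic_circleMap c R).comp f
  have φ_integrable (a b : ℝ) : IntervalIntegrable φ volume a b :=
    φ_periodic.intervalIntegrable₀ two_pi_pos.ne' hf a b
  have φ_neg_integrable : IntervalIntegrable (fun θ ↦ φ (-θ)) volume 0 π := by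
    simpa using (φ_integrable 0 (-π)).comp_sub_left 0
  have integral_period : ∫ θ in 0..2 * π, φ θ = ∫ θ in -π..π, φ θ := by
    have := φ_periodic.intervalIntegral_add_eq 0 (-π)
    rwa [zero_add, show -π + 2 * π = π by ring] at this
  calc circleAverage f c R
      = (2 * π)⁻¹ • ((∫ θ in -π..0, φ θ) + ∫ θ in 0..π, φ θ) := by
        rw [circleAverage_def, integral_period,
          intervalIntegral.integral_add_adjacent_intervals (φ_integrable _ _) (φ_integrable _ _)]
    _ = (2 * π)⁻¹ • ∫ θ in 0..π, (φ θ + φ (-θ)) := by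
        rw [intervalIntegral.integral_add (φ_integrable _ _) φ_neg_integrable,
          intervalIntegral.integral_comp_neg, neg_zero, add_comm]

theorem circleAverage_log_norm_of_forall_mem_ball_ne_zero {f : ℂ → ℂ} {c : ℂ} {R : ℝ}
    (hR : R ≠ 0) (hf : AnalyticOnNhd ℂ f (closedBall c |R|)) (hf₀ : ∀ z ∈ ball c |R|, f z ≠ 0) :
    circleAverage (fun z ↦ log ‖f z‖) c R = log ‖f c‖ := by
  rw [hf.circleAverage_log_norm hR (hf₀ c (mem_ball_self (abs_pos.mpr hR))), add_eq_right]
  -- Zeros on the boundary circle do not contribute to Jensen's formula: their weight is `log 1`.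
  refine finsum_eq_zero_of_forall_eq_zero fun z ↦ ?_
  rcases lt_trichotomy ‖c - z‖ |R| with hz | hz | hz
  · have hz_ball : z ∈ ball c |R| := by rwa [mem_ball, dist_comm, dist_eq_norm]
    have hz_closedBall := ball_subset_closedBall hz_ball
    simp [MeromorphicOn.AnalyticOnNhd.divisor_apply hf hz_closedBall,
      (hf z hz_closedBall).analyticOrderAt_eq_zero.mpr (hf₀ z hz_ball)]
  · have log_eq_zero : log (R * ‖c - z‖⁻¹) = 0 := by
      rw [← log_abs, abs_mul, abs_inv, abs_norm, hz, mul_inv_cancel₀ (abs_ne_zero.mpr hR), log_one]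
    rw [log_eq_zero, mul_zero]
  · have hz_closedBall : z ∉ closedBall c |R| := by
      rwa [mem_closedBall, dist_comm, dist_eq_norm, not_le]
    simp [hz_closedBall]

end CircleAverage

section AtInfinity

theorem tendsto_div_cobounded_of_tendsto_sub_mul {𝕜 : Type*} [NormedField 𝕜] {f : 𝕜 → 𝕜} {a c : 𝕜}
    (hf : Tendsto (fun z ↦ f z - c * z) (cobounded 𝕜) (𝓝 a)) :
    Tendsto (fun z ↦ f z / z) (cobounded 𝕜) (𝓝 c) := by
  have h_lim : Tendsto (fun z ↦ (f z - c * z) * z⁻¹ + c) (cobounded 𝕜) (𝓝 c) := by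
    simpa using (hf.mul tendsto_inv₀_cobounded).add_const c
  refine h_lim.congr' ?_
  filter_upwards [eventually_ne_cobounded 0] with z hz
  field_simp
  ring

theorem analyticOnNhd_update_comp_inv {E : Type*} [NormedAddCommGroup E] [NormedSpace ℂ E]
    [CompleteSpace E] {f : ℂ → E} {a : E} {r : ℝ} (hr : 0 < r)
    (hf : DifferentiableOn ℂ f {z | r < ‖z‖}) (hfa : Tendsto f (cobounded ℂ) (𝓝 a)) :
    AnalyticOnNhd ℂ (update (fun w ↦ f w⁻¹) 0 a) (ball 0 r⁻¹) := by
  refine DifferentiableOn.analyticOnNhd ?_ isOpen_ball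
  rw [← Complex.differentiableOn_compl_singleton_and_continuousAt_iff
    (ball_mem_nhds 0 (inv_pos.mpr hr)), continuousAt_update_same]
  refine ⟨?_, hfa.comp tendsto_inv₀_nhdsNE_zero⟩
  have h_inv : MapsTo (·⁻¹) (ball 0 r⁻¹ \ {0}) {z : ℂ | r < ‖z‖} := by
    rintro w ⟨hw, hw₀ : w ≠ 0⟩
    simpa [lt_inv_comm₀ hr (norm_pos_iff.mpr hw₀)] using hw
  refine (hf.comp (differentiableOn_inv.mono fun w hw ↦ hw.2) h_inv).congr fun w hw ↦ ?_
  exact update_of_ne hw.2 _ _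

theorem circleAverage_log_norm_of_tendsto_cobounded {f : ℂ → ℂ} {a : ℂ} {r R : ℝ}
    (hr : 0 < r) (hrR : r < R) (hf : DifferentiableOn ℂ f {z | r < ‖z‖})
    (hfa : Tendsto f (cobounded ℂ) (𝓝 a)) (ha : a ≠ 0) (hf₀ : ∀ z, R < ‖z‖ → f z ≠ 0) :
    circleAverage (fun z ↦ log ‖f z‖) 0 R = log ‖a‖ := by
  have hR : 0 < R := hr.trans hrR
  have hR_inv : 0 < R⁻¹ := inv_pos.mpr hR
  set h : ℂ → ℂ := update (fun w ↦ f w⁻¹) 0 a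
  have h_eq {w : ℂ} (hw : w ≠ 0) : h w = f w⁻¹ := update_of_ne hw _ _
  have h_zero : h 0 = a := update_self ..
  have h_analytic : AnalyticOnNhd ℂ h (closedBall 0 |R⁻¹|) := by
    refine (analyticOnNhd_update_comp_inv hr hf hfa).mono ?_
    rw [abs_of_pos hR_inv]
    exact closedBall_subset_ball (inv_strictAnti₀ hr hrR)
  have h_ne_zero : ∀ w ∈ ball 0 |R⁻¹|, h w ≠ 0 := by
    intro w hw
    rw [abs_of_pos hR_inv, mem_ball_zero_iff] at hw
    rcases eq_or_ne w 0 with rfl | hw₀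
    · rwa [h_zero]
    · have hw_inv : R < ‖w⁻¹‖ := by
        rwa [norm_inv, lt_inv_comm₀ hR (norm_pos_iff.mpr hw₀)]
      simpa only [h_eq hw₀] using hf₀ _ hw_inv
  calc circleAverage (fun z ↦ log ‖f z‖) 0 R
      = circleAverage (fun w ↦ log ‖f w⁻¹‖) 0 R⁻¹ :=
        (circleAverage_comp_inv (fun z ↦ log ‖f z‖) R).symm
    _ = circleAverage (fun w ↦ log ‖h w‖) 0 R⁻¹ := by
        refine circleAverage_congr_sphere fun w hw ↦ ?_
        simp only [h_eq (ne_of_mem_sphere hw (abs_pos.mpr hR_inv.ne').ne')]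
    _ = log ‖a‖ := by
        rw [circleAverage_log_norm_of_forall_mem_ball_ne_zero hR_inv.ne' h_analytic h_ne_zero,
          h_zero]

theorem circleAverage_log_norm_of_tendsto_div_cobounded {f : ℂ → ℂ} {c : ℂ} {r R : ℝ}
    (hr : 0 < r) (hrR : r < R) (hf : DifferentiableOn ℂ f {z | r < ‖z‖})
    (hfc : Tendsto (fun z ↦ f z / z) (cobounded ℂ) (𝓝 c)) (hc : c ≠ 0)
    (hf₀ : ∀ z, R < ‖z‖ → f z ≠ 0) :
    circleAverage (fun z ↦ log ‖f z‖) 0 R = log (R * ‖c‖) := by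
  have hR : 0 < R := hr.trans hrR
  have hR₀ : (R : ℂ) ≠ 0 := Complex.ofReal_ne_zero.mpr hR.ne'
  have quot_diff : DifferentiableOn ℂ (fun z ↦ R * (f z / z)) {z | r < ‖z‖} :=
    (hf.div differentiableOn_id fun z hz ↦ norm_pos_iff.mp (hr.trans hz)).const_mul _
  have quot_ne_zero : ∀ z, R < ‖z‖ → R * (f z / z) ≠ 0 := fun z hz ↦
    mul_ne_zero hR₀ (div_ne_zero (hf₀ z hz) (norm_pos_iff.mp (hR.trans hz)))
  have norm_quot_eq : ∀ z ∈ sphere (0 : ℂ) |R|, ‖R * (f z / z)‖ = ‖f z‖ := by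
    intro z hz
    rw [norm_mul, norm_div, mem_sphere_zero_iff_norm.mp hz, Complex.norm_real, Real.norm_eq_abs,
      mul_div_cancel₀ _ (abs_ne_zero.mpr hR.ne')]
  calc circleAverage (fun z ↦ log ‖f z‖) 0 R
      = circleAverage (fun z ↦ log ‖R * (f z / z)‖) 0 R :=
        circleAverage_congr_sphere fun z hz ↦ congrArg log (norm_quot_eq z hz).symm
    _ = log ‖R * c‖ := circleAverage_log_norm_of_tendsto_cobounded hr hrR quot_diff
        (hfc.const_mul _) (mul_ne_zero hR₀ hc) quot_ne_zero
    _ = log (R * ‖c‖) := by rw [norm_mul, Complex.norm_of_nonneg hR.le]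

end AtInfinity

theorem integral_greenG_semicircle_eq_circleAverage {g : ℂ → ℂ} {u : ℂ} {R : ℝ}
    (hsym : ∀ z ∈ sphere 0 |R|, g (starRingEnd ℂ z) = starRingEnd ℂ (g z))
    (hint : CircleIntegrable (fun z ↦ log ‖u - g z‖) 0 R) :
    (1 / π) * ∫ θ in 0..π, greenG u (g (circleMap 0 R θ)) =
      -2 * circleAverage (fun z ↦ log ‖u - g z‖) 0 R := by
  have greenG_eq (θ : ℝ) : greenG u (g (circleMap 0 R θ)) =
      -(log ‖u - g (circleMap 0 R θ)‖ + log ‖u - g (circleMap 0 R (-θ))‖) := by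
    rw [greenG, ← hsym _ (circleMap_mem_sphere' 0 R θ), conj_circleMap_zero]
    ring
  rw [circleAverage_eq_integral_zero_pi hint]
  simp only [greenG_eq, intervalIntegral.integral_neg, smul_eq_mul]
  field_simp

theorem green_avg_semicircle_infinity_general {g : ℂ → ℂ} {u c : ℂ} {r R : ℝ}
    (hr : 0 < r) (hR : r < R) (hg : DifferentiableOn ℂ g {z | r < ‖z‖})
    (hsym : ∀ z, r < ‖z‖ → g (starRingEnd ℂ z) = starRingEnd ℂ (g z))
    (hc : c ≠ 0) (hnorm : Tendsto (fun z ↦ g z / z) (cobounded ℂ) (𝓝 c))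
    (hu : u ∉ g '' {z | R < ‖z‖}) :
    (1 / π) * ∫ θ in 0..π, greenG u (g (R * Complex.exp (θ * Complex.I))) = -2 * log (R * ‖c‖) := by
  have norm_gt_of_mem_sphere : ∀ z ∈ sphere (0 : ℂ) |R|, r < ‖z‖ := by
    intro z hz
    rwa [mem_sphere_zero_iff_norm.mp hz, abs_of_pos (hr.trans hR)]
  have sub_diff : DifferentiableOn ℂ (fun z ↦ u - g z) {z | r < ‖z‖} := hg.const_sub u
  have sub_lim : Tendsto (fun z ↦ (u - g z) / z) (cobounded ℂ) (𝓝 (-c)) := by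
    simpa [sub_div, div_eq_mul_inv u] using (tendsto_inv₀_cobounded.const_mul u).sub hnorm
  have sub_ne_zero : ∀ z, R < ‖z‖ → u - g z ≠ 0 :=
    fun z hz h ↦ hu ⟨z, hz, (sub_eq_zero.mp h).symm⟩
  have log_integrable : CircleIntegrable (fun z ↦ log ‖u - g z‖) 0 R :=
    ((sub_diff.analyticOnNhd (isOpen_lt continuous_const continuous_norm)).mono
      norm_gt_of_mem_sphere).meromorphicOn.circleIntegrable_log_norm
  simp only [← circleMap_zero]
  rw [integral_greenG_semicircle_eq_circleAverage
      (fun z hz ↦ hsym z (norm_gt_of_mem_sphere z hz)) log_integrable,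
    circleAverage_log_norm_of_tendsto_div_cobounded hr hR sub_diff sub_lim (neg_ne_zero.mpr hc)
      sub_ne_zero, norm_neg]

/-- First claim of Lemma 4.3: for the Schwarz-reflection extension `g` of a
hydrodynamically normalized conformal map `ℍ → ℍ∖K` (with `K ⊆ {|z| ≤ r}`),
the average of `G(u, g(·))` over the semicircle of radius `R > r` equals
`−2 log R`, provided `u ∉ g({|z| ≥ R})`. -/
theorem green_avg_semicircle_infinity (r R : ℝ) (hr : 0 < r) (hR : r < R)
    (g : ℂ → ℂ)
    (hg : DifferentiableOn ℂ g {z : ℂ | r < ‖z‖})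
    (hsym : ∀ z : ℂ, r < ‖z‖ → g ((starRingEnd ℂ) z) = (starRingEnd ℂ) (g z))
    (hnorm : Filter.Tendsto (fun z => g z - z) (Bornology.cobounded ℂ) (nhds 0))
    (u : ℂ) (hu : u ∉ g '' {z : ℂ | R ≤ ‖z‖}) :
    (1 / Real.pi) * ∫ θ in (0:ℝ)..Real.pi,
        greenG u (g ((R : ℂ) * Complex.exp ((θ : ℂ) * Complex.I)))
      = -2 * Real.log R := by
  have h_lim : Tendsto (fun z ↦ g z / z) (cobounded ℂ) (𝓝 1) :=
    tendsto_div_cobounded_of_tendsto_sub_mul (by simpa using hnorm)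
  simpa using green_avg_semicircle_infinity_general hr hR hg hsym one_ne_zero h_lim
    fun h ↦ hu (image_mono (fun z (hz : R < ‖z‖) ↦ hz.le) h)
end

section
/- Let r > 0 and let g : ℂ → ℂ be holomorphic on {z ∈ ℂ : |z| > r}, satisfy g(conj z) = conj(g z) for all |z| > r, and satisfy g(z) − z → 0 as |z| → ∞ (along the cobounded filter on ℂ). Let R > r, suppose |g(z)| > 1 for all |z| ≥ R, and let u ∈ ℂ with u ∉ g({z : |z| ≥ R}). Then (1/π) ∫_{θ=0}^{π} G_ℍ(u, g(R·exp(iθ))) dθ = 2·log(max(|u|,1)). -/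
/-- The covariance kernel `G_ℍ(z,w) = −log|z−w| − log|z − conj w|
+ 2 log|z|₊ + 2 log|w|₊` of the free-boundary GFF on `ℍ` normalized on the
unit upper semicircle, where `|z|₊ = max(|z|,1)`. -/
noncomputable def greenGH (z w : ℂ) : ℝ :=
  -Real.log ‖z - w‖ - Real.log ‖z - (starRingEnd ℂ) w‖
    + 2 * Real.log (max ‖z‖ 1) + 2 * Real.log (max (‖w‖) 1)

/-!
With `w = g z` and `‖w‖ ≥ 1` on the circle `‖z‖ = R`, the two logarithmic poles combine to
`G(u, w) = 2 log‖u‖₊ - log‖1 - u / w‖ - log‖1 - u / conj w‖`. Since `conj w = g (conj z)`, the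
integral of the last two terms over the upper semicircle is that of `log‖1 - u / g‖` over the
whole circle. Outside the circle `1 - u / g` is holomorphic without zeros and tends to `1` at `∞`,
so the mean value property in the coordinate `z⁻¹` gives the average `log 1 = 0`.
-/

open Bornology Complex Filter InnerProductSpace MeasureTheory Metric Real Topology
open scoped ComplexConjugate

theorem tendsto_cobounded_of_tendsto_sub {α E : Type*} [SeminormedAddCommGroup E] {l : Filter α}
    {f g : α → E} {a : E} (hfg : Tendsto (fun x => f x - g x) l (𝓝 a))
    (hg : Tendsto g l (cobounded E)) : Tendsto f l (cobounded E) := by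
  rw [← tendsto_norm_atTop_iff_cobounded] at hg ⊢
  refine tendsto_atTop_mono (fun x => ?_) (hg.atTop_add hfg.norm.neg)
  simpa [norm_sub_rev, ← sub_eq_add_neg] using norm_sub_norm_le (g x) (g x - f x)

theorem closure_compl_closedBall {E : Type*} [SeminormedAddCommGroup E] [NormedSpace ℝ E]
    (c : E) {r : ℝ} (hr : r ≠ 0) : closure (closedBall c r)ᶜ = (ball c r)ᶜ := by
  rw [closure_compl, interior_closedBall c hr]

section CircleAverage

variable {E : Type*} [NormedAddCommGroup E] [NormedSpace ℝ E]

theorem circleAverage_zero_comp_inv (f : ℂ → E) (R : ℝ) :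
    circleAverage (fun z => f z⁻¹) 0 R⁻¹ = circleAverage f 0 R := by
  rw [circleAverage_eq_circleAverage_zero_one (f := f), ← circleAverage_zero_one_congr_inv,
    circleAverage_eq_circleAverage_zero_one]
  simp [mul_comm]

theorem integral_circleMap_add_conj {f : ℂ → E} {c R : ℝ} (hf : CircleIntegrable f c R) :
    ∫ θ in (0 : ℝ)..π, (f (circleMap c R θ) + f (conj (circleMap c R θ))) =
      (2 * π) • circleAverage f c R := by
  have hper : Function.Periodic (fun θ => f (circleMap c R θ)) (2 * π) :=
    (periodic_circleMap c R).comp f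
  have hint (a b : ℝ) : IntervalIntegrable (fun θ => f (circleMap c R θ)) volume a b :=
    hper.intervalIntegrable₀ two_pi_pos.ne' hf a b
  have hneg : IntervalIntegrable (fun θ => f (circleMap c R (-θ))) volume 0 π := by
    simpa using (IntervalIntegrable.iff_comp_neg (by simp)).1 (hint 0 (-π))
  simp only [conj_circleMap, conj_ofReal]
  calc ∫ θ in (0 : ℝ)..π, (f (circleMap c R θ) + f (circleMap c R (-θ)))
    _ = (∫ θ in (-π)..0, f (circleMap c R θ)) + ∫ θ in (0 : ℝ)..π, f (circleMap c R θ) := by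
      rw [intervalIntegral.integral_add (hint 0 π) hneg,
        intervalIntegral.integral_comp_neg (fun θ => f (circleMap c R θ)), neg_zero, add_comm]
    _ = ∫ θ in (-π)..(-π + 2 * π), f (circleMap c R θ) := by
      rw [intervalIntegral.integral_add_adjacent_intervals (hint _ _) (hint _ _)]
      ring_nf
    _ = (2 * π) • circleAverage f c R := by
      rw [hper.intervalIntegral_add_eq (-π) 0, zero_add, circleAverage_def,
        smul_inv_smul₀ two_pi_pos.ne']

end CircleAverage

section ExteriorMeanValue

variable {R : ℝ}

theorem diffContOnCl_update_comp_inv {E : Type*} [NormedAddCommGroup E] [NormedSpace ℂ E]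
    [CompleteSpace E] {f : ℂ → E} {a : E} (hR : 0 < R) (hf : DiffContOnCl ℂ f (closedBall 0 R)ᶜ)
    (ha : Tendsto f (cobounded ℂ) (𝓝 a)) :
    DiffContOnCl ℂ (Function.update (fun z => f z⁻¹) 0 a) (ball 0 R⁻¹) := by
  have hlim : Tendsto (fun z => f z⁻¹) (𝓝[≠] 0) (𝓝 a) := ha.comp tendsto_inv₀_nhdsNE_zero
  refine .mk_ball ?_ (continuousOn_update_iff.2
    ⟨?_, fun _ => hlim.mono_left (nhdsWithin_mono 0 fun z hz => hz.2)⟩)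
  · refine (differentiableOn_compl_singleton_and_continuousAt_iff
      (ball_mem_nhds 0 (inv_pos.2 hR))).1 ⟨?_, continuousAt_update_same.2 hlim⟩
    have hmaps : Set.MapsTo (·⁻¹) (ball (0 : ℂ) R⁻¹ \ {0}) (closedBall 0 R)ᶜ := fun z hz => by
      simpa [lt_inv_comm₀ hR (norm_pos_iff.2 hz.2)] using hz.1
    have hcomp : DifferentiableOn ℂ (fun z => f z⁻¹) (ball 0 R⁻¹ \ {0}) :=
      hf.differentiableOn.comp (differentiableOn_inv.mono fun z hz => hz.2) hmaps
    exact hcomp.congr fun z hz => Function.update_of_ne hz.2 _ _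
  · refine hf.continuousOn.comp (continuousOn_inv₀.mono fun z hz => hz.2) fun z hz => ?_
    rw [closure_compl_closedBall 0 hR.ne']
    simpa [le_inv_comm₀ hR (norm_pos_iff.2 hz.2)] using hz.1

theorem harmonicContOnCl_log_norm {f : ℂ → ℂ} {s : Set ℂ} (hs : IsOpen s)
    (hf : DiffContOnCl ℂ f s) (hne : ∀ z ∈ closure s, f z ≠ 0) :
    HarmonicContOnCl (fun z => Real.log ‖f z‖) s where
  harmonicOnNhd z hz :=
    (hf.differentiableOn.analyticAt (hs.mem_nhds hz)).harmonicAt_log_norm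
      (hne z (subset_closure hz))
  continuousOn := hf.continuousOn.norm.log fun z hz => norm_ne_zero_iff.2 (hne z hz)

theorem circleAverage_log_norm_of_tendsto_cobounded_s6 {f : ℂ → ℂ} {a : ℂ} (hR : 0 < R)
    (hf : DiffContOnCl ℂ f (closedBall 0 R)ᶜ) (hne : ∀ z, R ≤ ‖z‖ → f z ≠ 0) (ha₀ : a ≠ 0)
    (ha : Tendsto f (cobounded ℂ) (𝓝 a)) :
    circleAverage (fun z => Real.log ‖f z‖) 0 R = Real.log ‖a‖ := by
  set h : ℂ → ℂ := Function.update (fun z => f z⁻¹) 0 a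
  have h_of_ne {z : ℂ} (hz : z ≠ 0) : h z = f z⁻¹ := Function.update_of_ne hz _ _
  have h_ne_zero : ∀ z ∈ closure (ball 0 R⁻¹), h z ≠ 0 := by
    intro z hz
    obtain rfl | hz₀ := eq_or_ne z 0
    · simpa [h] using ha₀
    · rw [h_of_ne hz₀]
      refine hne _ ?_
      have hz : ‖z‖ ≤ R⁻¹ := by simpa using closure_ball_subset_closedBall hz
      rwa [norm_inv, le_inv_comm₀ hR (norm_pos_iff.2 hz₀)]
  have hharm : HarmonicContOnCl (fun z => Real.log ‖h z‖) (ball 0 |R⁻¹|) := by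
    rw [abs_of_pos (inv_pos.2 hR)]
    exact harmonicContOnCl_log_norm isOpen_ball (diffContOnCl_update_comp_inv hR hf ha) h_ne_zero
  calc circleAverage (fun z => Real.log ‖f z‖) 0 R
    _ = circleAverage (fun z => Real.log ‖f z⁻¹‖) 0 R⁻¹ :=
      (circleAverage_zero_comp_inv (fun z => Real.log ‖f z‖) R).symm
    _ = circleAverage (fun z => Real.log ‖h z‖) 0 R⁻¹ :=
      circleAverage_congr_sphere fun z hz => by
        simp only [h_of_ne (ne_of_mem_sphere hz (abs_pos.2 (inv_ne_zero hR.ne')).ne')]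
    _ = Real.log ‖h 0‖ := hharm.circleAverage_eq
    _ = Real.log ‖a‖ := by simp [h]

end ExteriorMeanValue

section LogNormOneSubDiv

variable {R : ℝ} {g : ℂ → ℂ} {u : ℂ}

theorem circleIntegrable_log_norm_one_sub_div {c : ℂ} (hg : ContinuousOn g (sphere c |R|))
    (h₀ : ∀ z ∈ sphere c |R|, g z ≠ 0) (hu : ∀ z ∈ sphere c |R|, g z ≠ u) :
    CircleIntegrable (fun z => Real.log ‖1 - u / g z‖) c R :=
  ((continuousOn_const.sub (continuousOn_const.div hg h₀)).norm.log fun z hz =>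
    norm_ne_zero_iff.2 (sub_ne_zero.2 (div_ne_one_of_ne (hu z hz).symm).symm)).circleIntegrable'

theorem circleAverage_log_norm_one_sub_div (hR : 0 < R) (hg : DiffContOnCl ℂ g (closedBall 0 R)ᶜ)
    (hpole : Tendsto g (cobounded ℂ) (cobounded ℂ)) (h₀ : ∀ z, R ≤ ‖z‖ → g z ≠ 0)
    (hu : ∀ z, R ≤ ‖z‖ → g z ≠ u) :
    circleAverage (fun z => Real.log ‖1 - u / g z‖) 0 R = 0 := by
  have hdiff : DiffContOnCl ℂ (fun z => 1 - u / g z) (closedBall 0 R)ᶜ := by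
    have hinv : DiffContOnCl ℂ g⁻¹ (closedBall 0 R)ᶜ := hg.inv fun z hz => h₀ z <| by
      simpa [closure_compl_closedBall (0 : ℂ) hR.ne'] using hz
    simpa [div_eq_mul_inv] using (hinv.const_smul u).const_sub 1
  have hlim : Tendsto (fun z => 1 - u / g z) (cobounded ℂ) (𝓝 1) := by
    simpa [div_eq_mul_inv] using
      ((tendsto_inv₀_cobounded.comp hpole).const_mul u).const_sub 1
  have hne (z : ℂ) (hz : R ≤ ‖z‖) : 1 - u / g z ≠ 0 :=
    sub_ne_zero.2 (div_ne_one_of_ne (hu z hz).symm).symm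
  simpa using circleAverage_log_norm_of_tendsto_cobounded_s6 hR hdiff hne one_ne_zero hlim

end LogNormOneSubDiv

theorem greenGH_eq_of_one_le_norm {u w : ℂ} (hw : 1 ≤ ‖w‖) (huw : u ≠ w) (huw' : u ≠ conj w) :
    greenGH u w = 2 * Real.log (max ‖u‖ 1) -
      (Real.log ‖1 - u / w‖ + Real.log ‖1 - u / conj w‖) := by
  have hw₀ : w ≠ 0 := norm_pos_iff.1 (one_pos.trans_le hw)
  have hlog {v : ℂ} (hv : v ≠ 0) (huv : u ≠ v) :
      Real.log ‖1 - u / v‖ = Real.log ‖u - v‖ - Real.log ‖v‖ := by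
    rw [one_sub_div hv, norm_div, norm_sub_rev,
      Real.log_div (norm_ne_zero_iff.2 (sub_ne_zero.2 huv)) (norm_ne_zero_iff.2 hv)]
  rw [hlog hw₀ huw, hlog ((map_ne_zero _).2 hw₀) huw', norm_conj, greenGH, max_eq_left hw]
  ring

theorem greenGH_avg_semicircle_general {R : ℝ} (hR : 0 < R) {g : ℂ → ℂ}
    (hg : DiffContOnCl ℂ g (closedBall 0 R)ᶜ)
    (hsym : ∀ z, ‖z‖ = R → g (conj z) = conj (g z))
    (hpole : Tendsto g (cobounded ℂ) (cobounded ℂ))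
    (hbig : ∀ z, ‖z‖ = R → 1 ≤ ‖g z‖) (h₀ : ∀ z, R ≤ ‖z‖ → g z ≠ 0)
    {u : ℂ} (hu : ∀ z, R ≤ ‖z‖ → g z ≠ u) :
    (1 / π) * ∫ θ in (0 : ℝ)..π, greenGH u (g (R * exp (θ * I))) = 2 * Real.log (max ‖u‖ 1) := by
  set m : ℝ := Real.log (max ‖u‖ 1)
  set F : ℂ → ℝ := fun z => Real.log ‖1 - u / g z‖
  have hsphere {z : ℂ} (hz : z ∈ sphere 0 |R|) : ‖z‖ = R := by simpa [abs_of_pos hR] using hz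
  have hF : CircleIntegrable F 0 R := by
    refine circleIntegrable_log_norm_one_sub_div (hg.continuousOn.mono fun z hz => ?_)
      (fun z hz => h₀ z (hsphere hz).ge) fun z hz => hu z (hsphere hz).ge
    simpa [closure_compl_closedBall (0 : ℂ) hR.ne'] using (hsphere hz).ge
  have hgreen (z : ℂ) (hz : ‖z‖ = R) : greenGH u (g z) = (m - F z) + (m - F (conj z)) := by
    have hz' : ‖conj z‖ = R := by rw [norm_conj, hz]
    rw [greenGH_eq_of_one_le_norm (hbig z hz) (hu z hz.ge).symm
      (hsym z hz ▸ (hu _ hz'.ge).symm), ← hsym z hz]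
    ring
  have hG : CircleIntegrable (fun z => m - F z) 0 R := (circleIntegrable_const m 0 R).sub hF
  have hmean : circleAverage (fun z => m - F z) 0 R = m := by
    rw [circleAverage_fun_sub (circleIntegrable_const m 0 R) hF, circleAverage_const,
      circleAverage_log_norm_one_sub_div hR hg hpole h₀ hu, sub_zero]
  calc (1 / π) * ∫ θ in (0 : ℝ)..π, greenGH u (g (R * exp (θ * I)))
    _ = (1 / π) * ∫ θ in (0 : ℝ)..π,
        ((m - F (circleMap 0 R θ)) + (m - F (conj (circleMap 0 R θ)))) := by
      congr 2 with θ
      rw [← circleMap_zero, hgreen _ (by simp [abs_of_pos hR])]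
    _ = (1 / π) * (2 * π * circleAverage (fun z => m - F z) 0 R) := by
      congr 1
      simpa only [ofReal_zero, smul_eq_mul] using integral_circleMap_add_conj (c := 0) hG
    _ = 2 * m := by
      rw [hmean]
      field_simp

/-- Third claim of Lemma 4.3: under the hypotheses of the Schwarz-reflection
extension of a hydrodynamically normalized conformal map, if moreover
`|g(z)| > 1` for `|z| ≥ R`, then the average of `G_ℍ(u, g(·))` on the
semicircle of radius `R` equals `G_ℍ(u, ∞) = 2 log(max(|u|,1))`. -/
theorem greenGH_avg_semicircle (r R : ℝ) (hr : 0 < r) (hR : r < R)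
    (g : ℂ → ℂ)
    (hg : DifferentiableOn ℂ g {z : ℂ | r < ‖z‖})
    (hsym : ∀ z : ℂ, r < ‖z‖ → g ((starRingEnd ℂ) z) = (starRingEnd ℂ) (g z))
    (hnorm : Filter.Tendsto (fun z => g z - z) (Bornology.cobounded ℂ) (nhds 0))
    (hbig : ∀ z : ℂ, R ≤ ‖z‖ → 1 < ‖g z‖)
    (u : ℂ) (hu : u ∉ g '' {z : ℂ | R ≤ ‖z‖}) :
    (1 / Real.pi) * ∫ θ in (0:ℝ)..Real.pi,
        greenGH u (g ((R : ℂ) * Complex.exp ((θ : ℂ) * Complex.I)))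
      = 2 * Real.log (max (‖u‖) 1) :=
  greenGH_avg_semicircle_general (hr.trans hR)
    (DifferentiableOn.diffContOnCl <| hg.mono <| by
      rw [closure_compl_closedBall 0 (hr.trans hR).ne']
      exact fun z hz => hR.trans_le (by simpa using hz))
    (fun z hz => hsym z (hR.trans_eq hz.symm))
    (tendsto_cobounded_of_tendsto_sub hnorm tendsto_id)
    (fun z hz => (hbig z hz.ge).le)
    (fun z hz => norm_pos_iff.1 (one_pos.trans (hbig z hz)))
    (fun z hz h => hu ⟨z, hz, h⟩)
end

section
/- Let x₀ ∈ ℝ and ε > 0, let U ⊆ ℂ be an open set containing the closed ball of radius ε around x₀, and let g : ℂ → ℂ be holomorphic on U with g(x) ∈ ℝ for every real x ∈ [x₀−ε, x₀+ε] and Im(g(v)) > 0 for every v in the closed ball with Im(v) > 0. Let u ∈ ℂ with Im(u) ≥ 0 and u ∉ g(closedBall(x₀, ε) ∩ {v : Im v ≥ 0}). Then (1/π) ∫_{θ=0}^{π} G(u, g(x₀ + ε·exp(iθ))) dθ = G(u, g(x₀)). -/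
/-!
By Schwarz reflection `g (conj v) = conj (g v)` on the whole ball, so for `v` on the upper
semicircle the two logarithms in `greenG u (g v)` are the values of `-log ‖u - g ·‖` at `v` and at
`conj v`. Integrating over the upper semicircle therefore gives the integral of `-log ‖u - g ·‖`
over the full circle, and the mean value property of this harmonic function applies.
-/

open Complex Filter MeasureTheory Metric Real Set Topology
open scoped ComplexConjugate

theorem circleAverage_eq_smul_integral_zero_pi {E : Type*} [NormedAddCommGroup E] [NormedSpace ℝ E]
    {f : ℂ → E} {c : ℂ} {R : ℝ} (hf : CircleIntegrable f c R) :
    circleAverage f c R =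
      (2 * π)⁻¹ • ∫ θ in 0..π, (f (circleMap c R θ) + f (circleMap c R (-θ))) := by
  set F : ℝ → E := fun θ ↦ f (circleMap c R θ)
  have hperiodic : F.Periodic (2 * π) := (periodic_circleMap c R).comp f
  have hint (a b : ℝ) : IntervalIntegrable F volume a b :=
    hperiodic.intervalIntegrable₀ two_pi_pos.ne' hf a b
  have hint_neg : IntervalIntegrable (fun θ ↦ F (-θ)) volume 0 π := by
    simpa using (IntervalIntegrable.iff_comp_neg (by finiteness)).1 (hint 0 (-π))
  have hshift : ∫ θ in 0..2 * π, F θ = ∫ θ in (-π)..π, F θ := by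
    simpa [show -π + 2 * π = π by ring] using hperiodic.intervalIntegral_add_eq 0 (-π)
  rw [circleAverage_def, hshift,
    ← intervalIntegral.integral_add_adjacent_intervals (hint (-π) 0) (hint 0 π),
    intervalIntegral.integral_add (hint 0 π) hint_neg, intervalIntegral.integral_comp_neg F,
    neg_zero, add_comm]

theorem analyticAt_conj_conj {f : ℂ → ℂ} {z : ℂ} (hf : AnalyticAt ℂ f (conj z)) :
    AnalyticAt ℂ (conj ∘ f ∘ conj) z := by
  rw [analyticAt_iff_eventually_differentiableAt] at hf ⊢
  filter_upwards [continuous_conj.continuousAt.eventually hf] with w hw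
  exact differentiableAt_conj_conj_iff.2 hw

theorem apply_conj_of_frequently_im_eq_zero {f : ℂ → ℂ} {s : Set ℂ} {x₀ : ℝ}
    (hf : AnalyticOnNhd ℂ f s) (hs : IsPreconnected s) (hconj : MapsTo conj s s)
    (hx₀ : (x₀ : ℂ) ∈ s) (hreal : ∃ᶠ x : ℝ in 𝓝[≠] x₀, (f x).im = 0) {z : ℂ} (hz : z ∈ s) :
    f (conj z) = conj (f z) := by
  have hofReal : Tendsto ((↑) : ℝ → ℂ) (𝓝[≠] x₀) (𝓝[≠] (x₀ : ℂ)) :=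
    continuous_ofReal.continuousAt.continuousWithinAt.tendsto_nhdsWithin
      fun x hx ↦ by simpa using hx
  have hfreq : ∃ᶠ w in 𝓝[≠] (x₀ : ℂ), f w = (conj ∘ f ∘ conj) w :=
    hofReal.frequently <| hreal.mono fun x hx ↦ by
      simpa only [Function.comp_apply, conj_ofReal] using (conj_eq_iff_im.2 hx).symm
  have heq := hf.eqOn_of_preconnected_of_frequently_eq
    (fun w hw ↦ analyticAt_conj_conj (hf _ (hconj hw))) hs hx₀ hfreq (hconj hz)
  simpa only [Function.comp_apply, conj_conj] using heq

theorem mapsTo_conj_closedBall_ofReal (x₀ r : ℝ) :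
    MapsTo conj (closedBall (x₀ : ℂ) r) (closedBall (x₀ : ℂ) r) := fun v hv ↦ by
  rwa [mem_closedBall, ← conj_ofReal x₀, dist_conj_conj]

theorem apply_conj_of_im_eq_zero_on_Icc {x₀ ε : ℝ} (hε : 0 < ε) {g : ℂ → ℂ}
    (hg : AnalyticOnNhd ℂ g (closedBall (x₀ : ℂ) ε))
    (hreal : ∀ x : ℝ, x ∈ Icc (x₀ - ε) (x₀ + ε) → (g x).im = 0) {v : ℂ}
    (hv : v ∈ closedBall (x₀ : ℂ) ε) : g (conj v) = conj (g v) := by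
  have hIcc : Icc (x₀ - ε) (x₀ + ε) ∈ 𝓝[≠] x₀ :=
    mem_nhdsWithin_of_mem_nhds (Icc_mem_nhds (by linarith) (by linarith))
  exact apply_conj_of_frequently_im_eq_zero hg (convex_closedBall _ _).isPreconnected
    (mapsTo_conj_closedBall_ofReal x₀ ε) (mem_closedBall_self hε.le)
    (eventually_of_mem hIcc hreal).frequently hv

theorem notMem_image_of_notMem_image_im_nonneg {g : ℂ → ℂ} {s : Set ℂ} (hconj : MapsTo conj s s)
    (hsymm : ∀ v ∈ s, g (conj v) = conj (g v)) (him : ∀ v ∈ s, 0 < v.im → 0 < (g v).im)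
    {u : ℂ} (huim : 0 ≤ u.im) (hu : u ∉ g '' (s ∩ {v | 0 ≤ v.im})) : u ∉ g '' s := by
  rintro ⟨v, hv, rfl⟩
  rcases le_or_gt 0 v.im with hv_nonneg | hv_neg
  · exact hu ⟨v, ⟨hv, hv_nonneg⟩, rfl⟩
  · have hpos : 0 < (g (conj v)).im := him _ (hconj hv) (by simpa using hv_neg)
    rw [hsymm v hv, conj_im] at hpos
    linarith

theorem green_mean_value_boundary_general {x₀ ε : ℝ} (hε : 0 < ε) {g : ℂ → ℂ}
    (hg : AnalyticOnNhd ℂ g (closedBall (x₀ : ℂ) ε))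
    (hreal : ∀ x : ℝ, x ∈ Icc (x₀ - ε) (x₀ + ε) → (g x).im = 0) {u : ℂ}
    (hu : u ∉ g '' closedBall (x₀ : ℂ) ε) :
    (1 / π) * ∫ θ in 0..π, greenG u (g (circleMap x₀ ε θ)) = greenG u (g x₀) := by
  set L : ℂ → ℝ := fun v ↦ Real.log ‖u - g v‖ with hL
  have hsub : AnalyticOnNhd ℂ (fun v ↦ u - g v) (closedBall (x₀ : ℂ) |ε|) := by
    rw [abs_of_pos hε]
    exact analyticOnNhd_const.sub hg
  have hne : ∀ v ∈ closedBall (x₀ : ℂ) |ε|, u - g v ≠ 0 := by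
    rw [abs_of_pos hε]
    exact fun v hv h ↦ hu ⟨v, hv, (sub_eq_zero.1 h).symm⟩
  have hmean : circleAverage L x₀ ε = L x₀ := hsub.circleAverage_log_norm_of_ne_zero hne
  have hLint : CircleIntegrable L x₀ ε :=
    (hsub.mono sphere_subset_closedBall).meromorphicOn.circleIntegrable_log_norm
  have hgreen {v : ℂ} (hv : v ∈ closedBall (x₀ : ℂ) ε) :
      greenG u (g v) = -(L v + L (conj v)) := by
    simp only [greenG, hL, apply_conj_of_im_eq_zero_on_Icc hε hg hreal hv]
    ring
  have hcircle (θ : ℝ) : greenG u (g (circleMap x₀ ε θ)) =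
      -(L (circleMap x₀ ε θ) + L (circleMap x₀ ε (-θ))) := by
    rw [hgreen (circleMap_mem_closedBall _ hε.le θ), conj_circleMap, conj_ofReal]
  have hcenter : greenG u (g x₀) = -(2 * L x₀) := by
    rw [hgreen (mem_closedBall_self hε.le), conj_ofReal, two_mul]
  rw [circleAverage_eq_smul_integral_zero_pi hLint, smul_eq_mul] at hmean
  simp only [hcircle, intervalIntegral.integral_neg, hcenter, ← hmean]
  field_simp

/-- Second claim of Lemma 4.6 (boundary mean value property): if `g` is
holomorphic on an open set containing `closedBall x₀ ε` (`x₀ ∈ ℝ`), maps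
`[x₀−ε, x₀+ε]` into `ℝ` and the open upper part of the ball into `ℍ`, and `u`
(with `Im u ≥ 0`) avoids the image of the closed upper half-ball, then the
average of `G(u, g(·))` on the upper semicircle `∂B_ε(x₀) ∩ ℍ` equals
`G(u, g(x₀))`. -/
theorem green_mean_value_boundary (x₀ : ℝ) (ε : ℝ) (hε : 0 < ε)
    (U : Set ℂ) (hU : IsOpen U) (hball : Metric.closedBall (x₀ : ℂ) ε ⊆ U)
    (g : ℂ → ℂ) (hg : DifferentiableOn ℂ g U)
    (hreal : ∀ x : ℝ, x ∈ Set.Icc (x₀ - ε) (x₀ + ε) → (g (x : ℂ)).im = 0)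
    (him : ∀ v ∈ Metric.closedBall (x₀ : ℂ) ε, 0 < v.im → 0 < (g v).im)
    (u : ℂ) (huim : 0 ≤ u.im)
    (hu : u ∉ g '' (Metric.closedBall (x₀ : ℂ) ε ∩ {v : ℂ | 0 ≤ v.im})) :
    (1 / Real.pi) * ∫ θ in (0:ℝ)..Real.pi,
        greenG u (g ((x₀ : ℂ) + (ε : ℂ) * Complex.exp ((θ : ℂ) * Complex.I)))
      = greenG u (g (x₀ : ℂ)) := by
  have hg' := (hg.analyticOnNhd hU).mono hball
  exact green_mean_value_boundary_general hε hg' hreal <|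
    notMem_image_of_notMem_image_im_nonneg (mapsTo_conj_closedBall_ofReal x₀ ε)
      (fun _ ↦ apply_conj_of_im_eq_zero_on_Icc hε hg' hreal) him huim hu
end

section
/- Let z₀ ∈ ℂ and ε > 0, let U ⊆ ℂ be an open set containing the closed ball of radius ε around z₀, and let g : ℂ → ℂ be holomorphic and injective on U with Im(g(v)) > 0 for every v in the closed ball. Then (1/(2π)) ∫_{θ=0}^{2π} G(g(z₀), g(z₀ + ε·exp(iθ))) dθ = −log ε − log|g'(z₀)| − log(2·Im(g(z₀))), where g' denotes the complex derivative of g. -/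
/-!
Divide the zero of `g - g z₀` at `z₀` out: the difference quotient `dslope g z₀` is holomorphic,
has the value `g' z₀` at `z₀`, and does not vanish on the ball because `g` is injective. On the
circle `|g - g z₀| = ε |dslope g z₀|`, so the mean value property of `log |dslope g z₀|` averages
the singular part of the Green function. The other part is the logarithm of the modulus of
`g - conj (g z₀)`, which has no zeros because `g` takes values in the upper half-plane.

That `g' z₀ ≠ 0` is seen through the inverse of `g`: it is continuous by the open mapping theorem
and holomorphic off the isolated critical values, hence everywhere by removability, and the chain
rule applies to `g⁻¹ ∘ g = id`.
-/

open Filter Function Metric Set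
open scoped ComplexConjugate Topology

section InvFunOn

theorem not_eventually_eq_of_injOn {X Y : Type*} [TopologicalSpace X] {f : X → Y} {s : Set X}
    {x : X} [(𝓝[≠] x).NeBot] (hinj : InjOn f s) (hs : s ∈ 𝓝 x) : ¬∀ᶠ y in 𝓝 x, f y = f x := by
  intro hconst
  have hpunctured : ∀ᶠ y in 𝓝[≠] x, (f y = f x ∧ y ∈ s) ∧ y ≠ x :=
    ((hconst.and hs).filter_mono nhdsWithin_le_nhds).and self_mem_nhdsWithin
  obtain ⟨y, ⟨hy, hys⟩, hyx⟩ := hpunctured.exists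
  exact hyx (hinj hys (mem_of_mem_nhds hs) hy)

theorem continuousAt_invFunOn {X Y : Type*} [TopologicalSpace X] [Nonempty X] [TopologicalSpace Y]
    {f : X → Y} {s : Set X} {x : X} (hinj : InjOn f s) (hs : s ∈ 𝓝 x)
    (hopen : 𝓝 (f x) ≤ map f (𝓝 x)) : ContinuousAt (invFunOn f s) (f x) := by
  have hleft : invFunOn f s ∘ f =ᶠ[𝓝 x] id := eventually_of_mem hs hinj.leftInvOn_invFunOn
  have htendsto : Tendsto (invFunOn f s) (map f (𝓝 x)) (𝓝 x) :=
    tendsto_map'_iff.2 (tendsto_id.congr' hleft.symm)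
  rw [ContinuousAt, hinj.leftInvOn_invFunOn (mem_of_mem_nhds hs)]
  exact htendsto.mono_left hopen

theorem differentiableAt_invFunOn {𝕜 : Type*} [NontriviallyNormedField 𝕜] {f : 𝕜 → 𝕜} {s : Set 𝕜}
    {x : 𝕜} (hinj : InjOn f s) (hs : s ∈ 𝓝 x) (hopen : 𝓝 (f x) ≤ map f (𝓝 x))
    (hderiv : deriv f x ≠ 0) : DifferentiableAt 𝕜 (invFunOn f s) (f x) := by
  have hright : ∀ᶠ y in 𝓝 (f x), f (invFunOn f s y) = y :=
    eventually_of_mem (hopen (image_mem_map hs)) fun _ ↦ invFunOn_eq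
  have hf : HasDerivAt f (deriv f x) (invFunOn f s (f x)) := by
    rw [hinj.leftInvOn_invFunOn (mem_of_mem_nhds hs)]
    exact (differentiableAt_of_deriv_ne_zero hderiv).hasDerivAt
  exact (hf.of_local_left_inverse (continuousAt_invFunOn hinj hs hopen) hderiv
    hright).differentiableAt

end InvFunOn

section Univalent

variable {f : ℂ → ℂ} {s : Set ℂ} {z : ℂ}

theorem nhds_le_map_nhds_of_injOn (hf : AnalyticAt ℂ f z) (hinj : InjOn f s) (hs : s ∈ 𝓝 z) :
    𝓝 (f z) ≤ map f (𝓝 z) :=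
  hf.eventually_constant_or_nhds_le_map_nhds.resolve_left (not_eventually_eq_of_injOn hinj hs)

theorem eventually_deriv_ne_zero_of_injOn (hf : AnalyticAt ℂ f z) (hinj : InjOn f s)
    (hs : s ∈ 𝓝 z) : ∀ᶠ w in 𝓝[≠] z, deriv f w ≠ 0 := by
  refine hf.deriv.eventually_eq_zero_or_eventually_ne_zero.resolve_left fun hderiv ↦ ?_
  obtain ⟨r, hr, hball⟩ := eventually_nhds_iff_ball.1 (hderiv.and hf.eventually_analyticAt)
  refine not_eventually_eq_of_injOn hinj hs (eventually_nhds_iff_ball.2 ⟨r, hr, fun w hw ↦ ?_⟩)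
  exact isOpen_ball.is_const_of_deriv_eq_zero (convex_ball z r).isPreconnected
    (fun v hv ↦ (hball v hv).2.differentiableAt.differentiableWithinAt)
    (fun v hv ↦ (hball v hv).1) hw (mem_ball_self hr)

theorem eventually_differentiableAt_invFunOn (hf : AnalyticAt ℂ f z) (hinj : InjOn f s)
    (hs : s ∈ 𝓝 z) : ∀ᶠ w in 𝓝[≠] f z, DifferentiableAt ℂ (invFunOn f s) w := by
  have hregular : ∀ᶠ v in 𝓝 z, v ≠ z → DifferentiableAt ℂ (invFunOn f s) (f v) := by
    filter_upwards [eventually_nhdsWithin_iff.1 (eventually_deriv_ne_zero_of_injOn hf hinj hs),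
      hf.eventually_analyticAt, eventually_mem_nhds_iff.2 hs] with v hderiv hfv hsv hvz
    exact differentiableAt_invFunOn hinj hsv (nhds_le_map_nhds_of_injOn hfv hinj hsv) (hderiv hvz)
  rw [eventually_nhdsWithin_iff]
  filter_upwards [nhds_le_map_nhds_of_injOn hf hinj hs (image_mem_map hregular)]
  rintro _ ⟨v, hv, rfl⟩ hne
  exact hv (ne_of_apply_ne f hne)

theorem deriv_ne_zero_of_injOn (hf : AnalyticAt ℂ f z) (hinj : InjOn f s) (hs : s ∈ 𝓝 z) :
    deriv f z ≠ 0 := by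
  have hinv : DifferentiableAt ℂ (invFunOn f s) (f z) :=
    (Complex.analyticAt_of_differentiable_on_punctured_nhds_of_continuousAt
      (eventually_differentiableAt_invFunOn hf hinj hs)
      (continuousAt_invFunOn hinj hs (nhds_le_map_nhds_of_injOn hf hinj hs))).differentiableAt
  have hleft : invFunOn f s ∘ f =ᶠ[𝓝 z] id := eventually_of_mem hs hinj.leftInvOn_invFunOn
  have hchain : deriv (invFunOn f s) (f z) * deriv f z = 1 := by
    rw [← deriv_comp z hinv hf.differentiableAt, hleft.deriv_eq, deriv_id]
  exact right_ne_zero_of_mul_eq_one hchain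

end Univalent

section DSlope

variable {𝕜 E : Type*} [NontriviallyNormedField 𝕜] [NormedAddCommGroup E] [NormedSpace 𝕜 E]
  {f : 𝕜 → E} {a b : 𝕜}

theorem analyticAt_dslope (ha : AnalyticAt 𝕜 f a) (hb : AnalyticAt 𝕜 f b) :
    AnalyticAt 𝕜 (dslope f a) b := by
  rcases eq_or_ne b a with rfl | hne
  · obtain ⟨p, hp⟩ := ha
    exact hp.has_fpower_series_dslope_fslope.analyticAt
  · have hslope : AnalyticAt 𝕜 (fun x ↦ (x - a)⁻¹ • (f x - f a)) b :=
      ((analyticAt_id.sub analyticAt_const).inv (sub_ne_zero.2 hne)).smul (hb.sub analyticAt_const)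
    exact hslope.congr (dslope_eventuallyEq_slope_of_ne f hne).symm

theorem dslope_ne_zero (hderiv : deriv f a ≠ 0) (hne : b ≠ a → f b ≠ f a) : dslope f a b ≠ 0 := by
  rcases eq_or_ne b a with rfl | hba
  · rwa [dslope_same]
  · intro hzero
    have hsub := sub_smul_dslope f a b
    rw [hzero, smul_zero] at hsub
    exact hne hba (sub_eq_zero.1 hsub.symm)

end DSlope

theorem circleAverage_fun_neg {E : Type*} [NormedAddCommGroup E] [NormedSpace ℝ E] (f : ℂ → E)
    (c : ℂ) (R : ℝ) : Real.circleAverage (fun z ↦ -f z) c R = -Real.circleAverage f c R := by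
  simp only [Real.circleAverage, intervalIntegral.integral_neg, smul_neg]

theorem circleAverage_log_norm_sub_center {f : ℂ → ℂ} {c : ℂ} {R : ℝ} (hR : R ≠ 0)
    (hf : AnalyticOnNhd ℂ f (closedBall c |R|)) (hderiv : deriv f c ≠ 0)
    (hne : ∀ z ∈ closedBall c |R|, z ≠ c → f z ≠ f c) :
    Real.circleAverage (fun z ↦ Real.log ‖f z - f c‖) c R
      = Real.log R + Real.log ‖deriv f c‖ := by
  have hsphere : EqOn (fun z ↦ Real.log ‖f z - f c‖) (fun z ↦ Real.log ‖R * dslope f c z‖)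
      (sphere c |R|) := fun z hz ↦ by
    simp only [← sub_smul_dslope f c z, smul_eq_mul, norm_mul, mem_sphere_iff_norm.1 hz,
      Complex.norm_real, Real.norm_eq_abs]
  have hanalytic : AnalyticOnNhd ℂ (fun z ↦ R * dslope f c z) (closedBall c |R|) := fun z hz ↦
    analyticAt_const.mul (analyticAt_dslope (hf c (mem_closedBall_self (abs_nonneg R))) (hf z hz))
  have hnonzero : ∀ z ∈ closedBall c |R|, R * dslope f c z ≠ 0 := fun z hz ↦
    mul_ne_zero (Complex.ofReal_ne_zero.2 hR) (dslope_ne_zero hderiv (hne z hz))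
  rw [Real.circleAverage_congr_sphere hsphere,
    hanalytic.circleAverage_log_norm_of_ne_zero hnonzero, dslope_same, norm_mul,
    Real.log_mul (by simpa using hR) (by simpa using hderiv), Complex.norm_real, Real.norm_eq_abs,
    Real.log_abs]

theorem greenG_comm (z w : ℂ) : greenG z w = greenG w z := by
  have hconj : ‖z - conj w‖ = ‖w - conj z‖ := by
    rw [← Complex.norm_conj, map_sub, Complex.conj_conj, norm_sub_rev]
  rw [greenG, greenG, hconj, norm_sub_rev]

theorem norm_sub_conj_self {z : ℂ} (hz : 0 ≤ z.im) : ‖z - conj z‖ = 2 * z.im := by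
  rw [Complex.sub_conj, norm_mul, Complex.norm_I, mul_one, Complex.norm_real,
    Real.norm_of_nonneg (by positivity)]

theorem ne_conj_of_im_pos {z w : ℂ} (hz : 0 < z.im) (hw : 0 ≤ w.im) : z ≠ conj w := by
  rintro rfl
  rw [Complex.conj_im] at hz
  linarith

theorem green_selfavg_interior_general {f : ℂ → ℂ} {c : ℂ} {R : ℝ} (hR : 0 < R)
    (hf : AnalyticOnNhd ℂ f (closedBall c R)) (hderiv : deriv f c ≠ 0)
    (hne : ∀ z ∈ closedBall c R, z ≠ c → f z ≠ f c) (him : 0 < (f c).im)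
    (hconj : ∀ z ∈ closedBall c R, f z ≠ conj (f c)) :
    Real.circleAverage (fun z ↦ greenG (f c) (f z)) c R
      = -Real.log R - Real.log ‖deriv f c‖ - Real.log (2 * (f c).im) := by
  rw [← abs_of_pos hR] at hf hne hconj
  have hintegrable (a : ℂ) : CircleIntegrable (fun z ↦ Real.log ‖f z - a‖) c R :=
    MeromorphicOn.circleIntegrable_log_norm fun z hz ↦
      ((hf z (sphere_subset_closedBall hz)).sub analyticAt_const).meromorphicAt
  have himage : Real.circleAverage (fun z ↦ Real.log ‖f z - conj (f c)‖) c R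
      = Real.log (2 * (f c).im) := by
    have hanalytic : AnalyticOnNhd ℂ (fun z ↦ f z - conj (f c)) (closedBall c |R|) :=
      hf.sub analyticOnNhd_const
    rw [hanalytic.circleAverage_log_norm_of_ne_zero fun z hz ↦ sub_ne_zero.2 (hconj z hz),
      norm_sub_conj_self him.le]
  calc Real.circleAverage (fun z ↦ greenG (f c) (f z)) c R
    _ = Real.circleAverage (fun z ↦ -Real.log ‖f z - f c‖ - Real.log ‖f z - conj (f c)‖) c R := by
      simp_rw [greenG_comm (f c), greenG]
    _ = -Real.circleAverage (fun z ↦ Real.log ‖f z - f c‖) c R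
          - Real.circleAverage (fun z ↦ Real.log ‖f z - conj (f c)‖) c R := by
      rw [← circleAverage_fun_neg]
      exact Real.circleAverage_fun_sub (hintegrable _).neg (hintegrable _)
    _ = -Real.log R - Real.log ‖deriv f c‖ - Real.log (2 * (f c).im) := by
      rw [circleAverage_log_norm_sub_center hR.ne' hf hderiv hne, himage]
      ring

/-- Interior variance computation from the proof of Lemma 6.4: if `g` is
holomorphic and injective on an open set containing `closedBall z₀ ε` and maps
the closed ball into `ℍ`, then the average of `G(g(z₀), g(·))` on the circle
`∂B_ε(z₀)` equals `−log ε − log|g'(z₀)| − log(2 Im g(z₀))`. -/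
theorem green_selfavg_interior (z₀ : ℂ) (ε : ℝ) (hε : 0 < ε)
    (U : Set ℂ) (hU : IsOpen U) (hball : Metric.closedBall z₀ ε ⊆ U)
    (g : ℂ → ℂ) (hg : DifferentiableOn ℂ g U) (hinj : Set.InjOn g U)
    (him : ∀ v ∈ Metric.closedBall z₀ ε, 0 < (g v).im) :
    (1 / (2 * Real.pi)) * ∫ θ in (0:ℝ)..(2 * Real.pi),
        greenG (g z₀) (g (z₀ + (ε : ℂ) * Complex.exp ((θ : ℂ) * Complex.I)))
      = -Real.log ε - Real.log ‖deriv g z₀‖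
        - Real.log (2 * (g z₀).im) := by
  have hcenter : z₀ ∈ closedBall z₀ ε := mem_closedBall_self hε.le
  have hanalytic : AnalyticOnNhd ℂ g U := hg.analyticOnNhd hU
  have hderiv : deriv g z₀ ≠ 0 :=
    deriv_ne_zero_of_injOn (hanalytic z₀ (hball hcenter)) hinj (hU.mem_nhds (hball hcenter))
  rw [one_div]
  exact green_selfavg_interior_general hε (hanalytic.mono hball) hderiv
    (fun v hv ↦ hinj.ne (hball hv) (hball hcenter)) (him z₀ hcenter)
    fun v hv ↦ ne_conj_of_im_pos (him v hv) (him z₀ hcenter).le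
end

section
/- Let Z₁, Z₂ : ℝ → ℂ, let t₀ ∈ ℝ and w ∈ ℝ. Suppose Z₁ has derivative −2/(Z₁(t₀) − w) at t₀ and Z₂ has derivative −2/(Z₂(t₀) − w) at t₀ (as functions from ℝ to ℂ), and that Z₁(t₀) ≠ w, Z₂(t₀) ≠ w, Z₁(t₀) ≠ Z₂(t₀), and Z₁(t₀) ≠ conj(Z₂(t₀)). Then the function t ↦ −log|Z₁(t) − Z₂(t)| − log|Z₁(t) − conj(Z₂(t))| has derivative −4·Re(1/(Z₁(t₀) − w))·Re(1/(Z₂(t₀) − w)) at t₀. -/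
/-!
Write `v(z) = c / (z - w)` for the Loewner vector field. Its difference quotient is
`(v(x) - v(y)) / (x - y) = -c / ((x - w) (y - w))`, and `log ‖x - y‖` evolves along the flow at the
real part of this. As `c` and `w` are real, `conj Z₂` is again a trajectory of the flow, so the same
computation applies to both terms of the Green's function; with `a = 1 / (Z₁ - w)` and
`b = 1 / (Z₂ - w)` the two contributions add up through `Re (a b) + Re (a conj b) = 2 Re a Re b`.
-/

open scoped ComplexConjugate RealInnerProductSpace

theorem hasDerivAt_log_norm {F : Type*} [NormedAddCommGroup F] [InnerProductSpace ℝ F]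
    {f : ℝ → F} {f' : F} {t : ℝ} (hf : HasDerivAt f f' t) (hft : f t ≠ 0) :
    HasDerivAt (fun s => Real.log ‖f s‖) (⟪f t, f'⟫ / ‖f t‖ ^ 2) t := by
  have log_norm_eq : (fun s => Real.log ‖f s‖) = fun s => Real.log (‖f s‖ ^ 2) / 2 := by
    funext s
    rw [Real.log_pow, Nat.cast_ofNat, mul_div_cancel_left₀ _ two_ne_zero]
  rw [log_norm_eq]
  refine ((hf.norm_sq.log (by simpa using hft)).div_const 2).congr_deriv ?_
  ring

theorem real_inner_div_norm_sq (z w : ℂ) : ⟪z, w⟫ / ‖z‖ ^ 2 = (w / z).re := by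
  rw [Complex.inner, Complex.div_re, Complex.normSq_eq_norm_sq, Complex.mul_re, Complex.conj_re,
    Complex.conj_im]
  ring

theorem hasDerivAt_log_norm_complex {f : ℝ → ℂ} {f' : ℂ} {t : ℝ} (hf : HasDerivAt f f' t)
    (hft : f t ≠ 0) : HasDerivAt (fun s => Real.log ‖f s‖) (f' / f t).re t :=
  real_inner_div_norm_sq (f t) f' ▸ hasDerivAt_log_norm hf hft

theorem re_mul_add_re_mul_conj (a b : ℂ) : (a * b).re + (a * conj b).re = 2 * a.re * b.re := by
  simp only [Complex.mul_re, Complex.conj_re, Complex.conj_im]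
  ring

theorem div_sub_sub_div_sub_div_sub {K : Type*} [Field K] {x y w : K} (c : K) (hx : x ≠ w)
    (hy : y ≠ w) (hxy : x ≠ y) :
    (c / (x - w) - c / (y - w)) / (x - y) = -c * (1 / (x - w) * (1 / (y - w))) := by
  have hxw := sub_ne_zero.2 hx
  have hyw := sub_ne_zero.2 hy
  have hxy' := sub_ne_zero.2 hxy
  field_simp
  ring

section LoewnerFlow

variable {Z Z₁ Z₂ : ℝ → ℂ} {c w : ℂ} {t : ℝ}

theorem hasDerivAt_conj_loewner (h : HasDerivAt Z (c / (Z t - w)) t) :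
    HasDerivAt (fun s => conj (Z s)) (conj c / (conj (Z t) - conj w)) t := by
  rw [← map_sub, ← map_div₀]
  exact h.star

theorem hasDerivAt_log_norm_sub_loewner (h₁ : HasDerivAt Z₁ (c / (Z₁ t - w)) t)
    (h₂ : HasDerivAt Z₂ (c / (Z₂ t - w)) t) (hw₁ : Z₁ t ≠ w) (hw₂ : Z₂ t ≠ w)
    (hne : Z₁ t ≠ Z₂ t) :
    HasDerivAt (fun s => Real.log ‖Z₁ s - Z₂ s‖)
      (-c * (1 / (Z₁ t - w) * (1 / (Z₂ t - w)))).re t :=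
  div_sub_sub_div_sub_div_sub c hw₁ hw₂ hne ▸
    hasDerivAt_log_norm_complex (h₁.fun_sub h₂) (sub_ne_zero.2 hne)

end LoewnerFlow

/-- Identity `dG(Z_j, Z_k) = −4 Re(1/(Z_j − W)) Re(1/(Z_k − W)) dt` from the
proof of Lemma 3.1: if `Z₁, Z₂` follow the reverse Loewner flow
`dZ = −2 dt/(Z − w)` at time `t₀` (with real driving value `w`), and
`Z₁(t₀) ≠ w`, `Z₂(t₀) ≠ w`, `Z₁(t₀) ≠ Z₂(t₀)`, `Z₁(t₀) ≠ conj(Z₂(t₀))`, then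
`t ↦ −log|Z₁ − Z₂| − log|Z₁ − conj Z₂|` has the stated derivative at `t₀`. -/
theorem green_two_points_deriv (Z₁ Z₂ : ℝ → ℂ) (t₀ w : ℝ)
    (h₁ : HasDerivAt Z₁ (-2 / (Z₁ t₀ - (w : ℂ))) t₀)
    (h₂ : HasDerivAt Z₂ (-2 / (Z₂ t₀ - (w : ℂ))) t₀)
    (hw₁ : Z₁ t₀ ≠ (w : ℂ)) (hw₂ : Z₂ t₀ ≠ (w : ℂ))
    (hne : Z₁ t₀ ≠ Z₂ t₀) (hne' : Z₁ t₀ ≠ (starRingEnd ℂ) (Z₂ t₀)) :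
    HasDerivAt (fun t => -Real.log ‖Z₁ t - Z₂ t‖
        - Real.log ‖Z₁ t - (starRingEnd ℂ) (Z₂ t)‖)
      (-4 * (1 / (Z₁ t₀ - (w : ℂ))).re * (1 / (Z₂ t₀ - (w : ℂ))).re) t₀ := by
  have h₂_conj : HasDerivAt (fun t => conj (Z₂ t)) (-2 / (conj (Z₂ t₀) - (w : ℂ))) t₀ := by
    simpa only [map_neg, map_ofNat, Complex.conj_ofReal] using hasDerivAt_conj_loewner h₂
  have hw₂_conj : conj (Z₂ t₀) ≠ (w : ℂ) := by
    rwa [← Complex.conj_ofReal w, (starRingEnd ℂ).injective.ne_iff]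
  have h_log := hasDerivAt_log_norm_sub_loewner h₁ h₂ hw₁ hw₂ hne
  have h_log_conj := hasDerivAt_log_norm_sub_loewner h₁ h₂_conj hw₁ hw₂_conj hne'
  refine (h_log.fun_neg.fun_sub h_log_conj).congr_deriv ?_
  have conj_factor : 1 / (conj (Z₂ t₀) - (w : ℂ)) = conj (1 / (Z₂ t₀ - (w : ℂ))) := by
    simp only [map_div₀, map_one, map_sub, Complex.conj_ofReal]
  simp only [conj_factor, neg_neg, two_mul, Complex.add_re]
  linear_combination
    -2 * re_mul_add_re_mul_conj (1 / (Z₁ t₀ - (w : ℂ))) (1 / (Z₂ t₀ - (w : ℂ)))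
end
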